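/- Let D be a domain in ℂ and let M be a free maximal ideal of H(D). Then ki(M) := ⋂_{n=1}^∞ Mⁿ is a prime ideal of H(D) that is contained in M and is not maximal (in particular ki(M) ⊊ M), and moreover it is the largest non-maximal prime ideal contained in M: every prime ideal P of H(D) with ki(M) ⊆ P ⊆ M satisfies P = ki(M) or P = M. -/

import Mathlib

set_option synthInstance.maxHeartbeats 400000
set_option maxHeartbeats 800000

/-- The Krull intersection of an ideal `I`: the intersection `⋂_{n=1}^∞ Iⁿ`. -/
def ki {R : Type*} [CommRing R] (I : Ideal R) : Ideal R :=
  ⨅ (n : ℕ) (_ : 1 ≤ n), I ^ n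

/-- The ring `H(D)` of holomorphic functions on a set `D ⊆ ℂ`, realized as the subalgebra of
`D → ℂ` (with pointwise operations) of functions admitting a holomorphic (complex
differentiable) extension to (an ambient function on) `D`. -/
def Hol (D : Set ℂ) : Subalgebra ℂ (D → ℂ) where
  carrier := {f | ∃ F : ℂ → ℂ, DifferentiableOn ℂ F D ∧ ∀ z : D, F z = f z}
  add_mem' := by
    rintro f g ⟨F, hF, hFf⟩ ⟨G, hG, hGg⟩
    exact ⟨F + G, hF.add hG, fun z => by simp [hFf z, hGg z]⟩
  mul_mem' := by
    rintro f g ⟨F, hF, hFf⟩ ⟨G, hG, hGg⟩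
    exact ⟨F * G, hF.mul hG, fun z => by simp [hFf z, hGg z]⟩
  algebraMap_mem' := fun c => ⟨fun _ => c, differentiableOn_const c, fun _ => rfl⟩

/-- The zero set `Z_D(f) = {z ∈ D : f(z) = 0}` of `f ∈ H(D)`. -/
def ZD {D : Set ℂ} (f : Hol D) : Set D := {z | (f : D → ℂ) z = 0}

/-- `ordGE f ζ n` says that the order (multiplicity) of `ζ` as a zero of `f ∈ H(D)` is at
least `n`, expressed by the (equivalent, for `D` open) divisibility condition that
`(z - ζ)^n` divides `f` in `H(D)`. -/
def ordGE {D : Set ℂ} (f : Hol D) (ζ : D) (n : ℕ) : Prop :=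
  ∃ g : Hol D, ∀ z : D, (f : D → ℂ) z = ((z : ℂ) - (ζ : ℂ)) ^ n * (g : D → ℂ) z

/-!
The localization of `H(D)` at a maximal ideal `M` has a principal maximal ideal, generated by a
nonzerodivisor `p`. Outside `ki M` every element is therefore, up to factors not in `M`, a power
of `p`: this makes `ki M` prime, and a prime between `ki M` and `M` that is larger than `ki M`
contains `p`, hence equals `M`. To find `p`, take `f ∈ M` that vanishes identically on no component
of `D` and let `p` have a simple zero at each zero of `f`. Such a `p` exists because germs of
holomorphic functions can be interpolated modulo the zeros of `f`: divide the germs by `f`, solve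
the resulting Mittag-Leffler problem, and multiply by `f`. On an arbitrary open set the principal
parts are corrected in the Mittag-Leffler series as in Runge's theorem, by pushing their poles to
the complement of `D` or to infinity. The same interpolation gives the Bézout identities that turn
inequalities between vanishing orders into membership in ideals.
-/

open Filter Topology Set Polynomial

section KrullIntersection

variable {R : Type*} [CommRing R]

theorem mem_ki {I : Ideal R} {x : R} : x ∈ ki I ↔ ∀ n, x ∈ I ^ n := by
  simp only [ki, Submodule.mem_iInf]
  refine ⟨fun h n ↦ ?_, fun h n _ ↦ h n⟩
  rcases n.eq_zero_or_pos with rfl | hn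
  · simp
  · exact h n hn

theorem ki_le (I : Ideal R) : ki I ≤ I := fun x hx ↦ by simpa using mem_ki.1 hx 1

theorem mem_pow_of_mul_mem_pow {M : Ideal R} (hM : M.IsMaximal) {n : ℕ} {s x : R} (hs : s ∉ M)
    (h : s * x ∈ M ^ n) : x ∈ M ^ n := by
  rcases n.eq_zero_or_pos with rfl | hn
  · simp
  have hrad : (M ^ n).radical = M := by rw [Ideal.radical_pow M hn.ne', hM.isPrime.radical]
  have hprimary : (M ^ n).IsPrimary := Ideal.isPrimary_of_isMaximal_radical (by rwa [hrad])
  rw [mul_comm] at h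
  exact ((Ideal.isPrimary_iff.1 hprimary).2 h).resolve_right (by rwa [hrad])

/-- `p` is a local generator of the prime ideal `M`: it lies in `M` and generates the maximal ideal
of the localization `R_M`. The latter is expressed without fractions, by clearing denominators
`s ∉ M`. -/
def IsLocalGenerator (M : Ideal R) (p : R) : Prop :=
  p ∈ M ∧ ∀ u ∈ M, ∃ s ∉ M, p ∣ s * u

namespace IsLocalGenerator

variable {M : Ideal R} {p : R}

theorem exists_pow_dvd_mul (hp : IsLocalGenerator M p) (hM : M.IsPrime) (n : ℕ) {x : R}
    (hx : x ∈ M ^ n) : ∃ s ∉ M, p ^ n ∣ s * x := by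
  induction n generalizing x with
  | zero => exact ⟨1, M.ne_top_iff_one.1 hM.ne_top, by simp⟩
  | succ n ih =>
    rw [pow_succ] at hx
    refine Submodule.mul_induction_on hx (fun a ha b hb ↦ ?_) ?_
    · obtain ⟨s, hs, hsa⟩ := ih ha
      obtain ⟨t, ht, htb⟩ := hp.2 b hb
      refine ⟨s * t, hM.mul_notMem hs ht, ?_⟩
      rw [pow_succ, mul_mul_mul_comm]
      exact mul_dvd_mul hsa htb
    · rintro a b ⟨s, hs, hsa⟩ ⟨t, ht, htb⟩
      refine ⟨s * t, hM.mul_notMem hs ht, ?_⟩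
      rw [show s * t * (a + b) = t * (s * a) + s * (t * b) by ring]
      exact dvd_add (hsa.mul_left t) (htb.mul_left s)

theorem exists_mul_eq_pow_mul (hp : IsLocalGenerator M p) (hM : M.IsMaximal) {x : R}
    (hx : x ∉ ki M) : ∃ k, ∃ s ∉ M, ∃ v ∉ M, s * x = p ^ k * v := by
  obtain ⟨n, hn⟩ : ∃ n, x ∉ M ^ n := by simpa [mem_ki] using hx
  obtain ⟨k, hk, hk'⟩ : ∃ k, x ∈ M ^ k ∧ x ∉ M ^ (k + 1) := by
    by_contra! h
    exact hn (Nat.rec (by simp) h n)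
  obtain ⟨s, hs, v, hv⟩ := hp.exists_pow_dvd_mul hM.isPrime k hk
  refine ⟨k, s, hs, v, fun hvM ↦ hk' (mem_pow_of_mul_mem_pow hM hs ?_), hv⟩
  rw [hv, pow_succ]
  exact Ideal.mul_mem_mul (Ideal.pow_mem_pow hp.1 k) hvM

theorem ki_ne (hp : IsLocalGenerator M p) (hM : M.IsPrime) (hreg : p ∈ nonZeroDivisors R) :
    ki M ≠ M := by
  intro h
  obtain ⟨s, hs, v, hv⟩ := hp.exists_pow_dvd_mul hM 2 (mem_ki.1 (h.symm ▸ hp.1) 2)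
  have hs' : s = p * v := (mul_cancel_right_mem_nonZeroDivisors hreg).1 (by rw [hv]; ring)
  exact hs (hs' ▸ M.mul_mem_right v hp.1)

theorem ki_isPrime (hp : IsLocalGenerator M p) (hM : M.IsMaximal) (hreg : p ∈ nonZeroDivisors R) :
    (ki M).IsPrime := by
  have hM' : M.IsPrime := hM.isPrime
  refine ⟨fun h ↦ hM'.ne_top (top_le_iff.1 (h ▸ ki_le M)), fun {x y} hxy ↦ ?_⟩
  by_contra! hxy'
  obtain ⟨k, s, -, v, hv, hx⟩ := hp.exists_mul_eq_pow_mul hM hxy'.1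
  obtain ⟨l, t, -, w, hw, hy⟩ := hp.exists_mul_eq_pow_mul hM hxy'.2
  obtain ⟨r, hr, q, hq⟩ := hp.exists_pow_dvd_mul hM' (k + l + 1) (mem_ki.1 hxy _)
  have hvw : r * (v * w) = p * (q * s * t) := by
    refine (mul_cancel_left_mem_nonZeroDivisors (pow_mem hreg (k + l))).1 ?_
    calc p ^ (k + l) * (r * (v * w)) = r * ((p ^ k * v) * (p ^ l * w)) := by ring
      _ = (r * (x * y)) * (s * t) := by rw [← hx, ← hy]; ring
      _ = p ^ (k + l) * (p * (q * s * t)) := by rw [hq]; ring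
  exact hM'.mul_notMem hr (hM'.mul_notMem hv hw) (hvw ▸ M.mul_mem_right _ hp.1)

theorem eq_of_ki_le (hp : IsLocalGenerator M p) (hM : M.IsMaximal) {P : Ideal R} (hP : P.IsPrime)
    (hle : ki M ≤ P) (hPM : P ≤ M) : P = ki M ∨ P = M := by
  refine or_iff_not_imp_left.2 fun hne ↦ le_antisymm hPM fun u hu ↦ ?_
  obtain ⟨x, hxP, hx⟩ := SetLike.not_le_iff_exists.1 fun h ↦ hne (le_antisymm h hle)
  obtain ⟨k, s, -, v, hv, hsx⟩ := hp.exists_mul_eq_pow_mul hM hx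
  have hpv : p ^ k * v ∈ P := hsx ▸ P.mul_mem_left s hxP
  have hpP : p ∈ P := hP.mem_of_pow_mem k ((hP.mem_or_mem hpv).resolve_right fun h ↦ hv (hPM h))
  obtain ⟨t, ht, w, htu⟩ := hp.2 u hu
  have htuP : t * u ∈ P := htu ▸ P.mul_mem_right w hpP
  exact (hP.mem_or_mem htuP).resolve_left fun h ↦ ht (hPM h)

end IsLocalGenerator

end KrullIntersection

section PolePushing

variable {D K : Set ℂ} {a : ℂ}

theorem exists_mem_mul_eq_one_of_norm_one_sub_mul_lt {A σ : Type*} [NormedRing A] [CompleteSpace A]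
    [SetLike σ A] [SubringClass σ A] {S : σ} (hS : IsClosed (S : Set A)) {u b : A} (hu : u ∈ S)
    (hb : b ∈ S) (h : ‖1 - u * b‖ < 1) : ∃ g ∈ S, g * b = 1 := by
  set x := 1 - u * b with hx
  have hxS : x ∈ S := sub_mem (one_mem S) (mul_mem hu hb)
  have hsum : ∑' n : ℕ, x ^ n ∈ S := hS.mem_of_tendsto
    (summable_geometric_of_norm_lt_one h).hasSum
    (Eventually.of_forall fun s ↦ sum_mem fun n _ ↦ pow_mem hxS n)
  refine ⟨(∑' n : ℕ, x ^ n) * u, mul_mem hsum hu, ?_⟩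
  rw [mul_assoc, show u * b = 1 - x by rw [hx, sub_sub_cancel], geom_series_mul_neg x h]

/-- The algebra of restrictions to `K` of functions holomorphic on `D`; its topological closure
consists of their uniform limits on `K`. -/
def holRestrict (D K : Set ℂ) : Subalgebra ℂ C(K, ℂ) where
  carrier := {g | ∃ F : ℂ → ℂ, DifferentiableOn ℂ F D ∧ ∀ z : K, g z = F z}
  add_mem' := by
    rintro f g ⟨F, hF, hFf⟩ ⟨G, hG, hGg⟩
    exact ⟨F + G, hF.add hG, fun z ↦ by simp [hFf z, hGg z]⟩
  mul_mem' := by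
    rintro f g ⟨F, hF, hFf⟩ ⟨G, hG, hGg⟩
    exact ⟨F * G, hF.mul hG, fun z ↦ by simp [hFf z, hGg z]⟩
  algebraMap_mem' := fun c ↦ ⟨fun _ ↦ c, differentiableOn_const c, fun _ ↦ rfl⟩

/-- The pole `a` can be pushed out of `D` as seen from `K`: the function `z ↦ (z - a)⁻¹` is defined
on `K` and is there a uniform limit of functions holomorphic on `D`. -/
def IsPolePushable (D K : Set ℂ) (a : ℂ) : Prop :=
  ∃ g ∈ closure (holRestrict D K : Set C(K, ℂ)), ∀ z : K, g z * (z - a) = 1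

theorem isPolePushable_empty : IsPolePushable D ∅ a :=
  ⟨1, subset_closure (one_mem _), fun z ↦ z.2.elim⟩

theorem isPolePushable_of_norm_one_sub_mul_le (hK : IsCompact K) (hKD : K ⊆ D) {u : ℂ → ℂ}
    (hu : DifferentiableOn ℂ u D) {c : ℝ} (hc : c < 1)
    (h : ∀ z ∈ K, ‖1 - u z * (z - a)‖ ≤ c) : IsPolePushable D K a := by
  have := isCompact_iff_compactSpace.1 hK
  let v : C(K, ℂ) := ⟨K.domRestrict u, (hu.continuousOn.mono hKD).domRestrict⟩
  let b : C(K, ℂ) := ⟨fun z ↦ z - a, by fun_prop⟩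
  have hv : v ∈ holRestrict D K := ⟨u, hu, fun _ ↦ rfl⟩
  have hb : b ∈ holRestrict D K := ⟨fun z ↦ z - a, by fun_prop, fun _ ↦ rfl⟩
  have hlt : ‖1 - v * b‖ < 1 :=
    (ContinuousMap.norm_lt_iff _ one_pos).2 fun z ↦ (h z z.2).trans_lt hc
  obtain ⟨g, hg, hgb⟩ := exists_mem_mul_eq_one_of_norm_one_sub_mul_lt
    (holRestrict D K).isClosed_topologicalClosure (subset_closure hv) (subset_closure hb) hlt
  exact ⟨g, hg, fun z ↦ DFunLike.congr_fun hgb z⟩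

-- A pole close to the complement of `D` is pushed to a nearby point outside `D`, and a pole far
-- from `K` is pushed to infinity.
theorem exists_isCompact_forall_isPolePushable (hD : IsOpen D) (hK : IsCompact K) (hKD : K ⊆ D) :
    ∃ K' ⊆ D, IsCompact K' ∧ ∀ a ∉ K', IsPolePushable D K a := by
  obtain ⟨ε, hε, hKε⟩ := hK.exists_thickening_subset_open hD hKD
  obtain ⟨R, hR, hKR⟩ := hK.isBounded.exists_pos_norm_le
  refine ⟨Metric.closedBall 0 (2 * R) \ Metric.thickening (ε / 2) Dᶜ, fun z hz ↦ ?_,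
    (isCompact_closedBall _ _).diff Metric.isOpen_thickening, fun a ha ↦ ?_⟩
  · by_contra hzD
    exact hz.2 (Metric.self_subset_thickening (half_pos hε) _ hzD)
  rw [Set.mem_sdiff, not_and_not_right, mem_closedBall_zero_iff] at ha
  rcases lt_or_ge (2 * R) ‖a‖ with hfar | hnear
  · have ha0 : a ≠ 0 := norm_pos_iff.1 (by linarith)
    refine isPolePushable_of_norm_one_sub_mul_le hK hKD (u := fun _ ↦ -a⁻¹)
      (differentiableOn_const _) one_half_lt_one fun z hz ↦ ?_
    rw [show 1 - -a⁻¹ * (z - a) = z / a by field_simp; ring, norm_div,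
      div_le_iff₀ (norm_pos_iff.2 ha0)]
    linarith [hKR z hz]
  · obtain ⟨w, hw, haw⟩ := Metric.mem_thickening_iff.1 (ha hnear)
    have hzw : ∀ z ∈ K, ε ≤ ‖z - w‖ := fun z hz ↦ by
      by_contra! hlt
      exact hw (hKε (Metric.mem_thickening_iff.2 ⟨z, hz, by rwa [dist_comm, dist_eq_norm]⟩))
    refine isPolePushable_of_norm_one_sub_mul_le hK hKD (u := fun z ↦ (z - w)⁻¹)
      (DifferentiableOn.inv (by fun_prop) fun z hz ↦ sub_ne_zero.2 (ne_of_mem_of_not_mem hz hw))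
      one_half_lt_one fun z hz ↦ ?_
    have hpos : 0 < ‖z - w‖ := hε.trans_le (hzw z hz)
    have hne : z - w ≠ 0 := norm_pos_iff.1 hpos
    rw [show 1 - (z - w)⁻¹ * (z - a) = (a - w) / (z - w) by field_simp; ring, norm_div,
      div_le_iff₀ hpos]
    rw [dist_eq_norm] at haw
    linarith [hzw z hz]

theorem exists_monotone_isCompact_exhaustion {X : Type*} [TopologicalSpace X]
    [LocallyCompactSpace X] [SecondCountableTopology X] {U : Set X} (hU : IsOpen U) :
    ∃ K : ℕ → Set X, Monotone K ∧ (∀ n, K n ⊆ U) ∧ (∀ n, IsCompact (K n)) ∧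
      ∀ L ⊆ U, IsCompact L → ∃ n, L ⊆ K n := by
  have := hU.locallyCompactSpace
  let E := CompactExhaustion.choice U
  refine ⟨fun n ↦ (↑) '' E n, fun m n hmn ↦ image_mono (E.subset hmn),
    fun n ↦ Subtype.coe_image_subset U _, fun n ↦ (E.isCompact n).image continuous_subtype_val,
    fun L hLU hL ↦ ?_⟩
  obtain ⟨n, hn⟩ := E.exists_superset_of_isCompact
    (IsInducing.subtypeVal.isCompact_preimage' hL (by simpa using hLU))
  exact ⟨n, by simpa [inter_eq_right.2 hLU] using image_mono (f := Subtype.val) hn⟩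

theorem exists_isPolePushable_family (hD : IsOpen D) :
    ∃ S : ℂ → Set ℂ, (∀ a ∈ D, IsCompact (S a) ∧ IsPolePushable D (S a) a) ∧
      ∀ K ⊆ D, IsCompact K → ∃ K' ⊆ D, IsCompact K' ∧ ∀ a ∈ D \ K', K ⊆ S a := by
  obtain ⟨K, hKmono, hKD, hK, hKexh⟩ := exists_monotone_isCompact_exhaustion hD
  choose K' hK'D hK' hpush using
    fun n ↦ exists_isCompact_forall_isPolePushable hD (hK n) (hKD n)
  let L := accumulate fun n ↦ K n ∪ K' n
  have hL : Monotone L := monotone_accumulate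
  have hsub (n : ℕ) : K n ∪ K' n ⊆ L n :=
    subset_accumulate (s := fun n ↦ K n ∪ K' n)
  have hpushable : ∀ a ∈ D, ∃ S, (IsCompact S ∧ IsPolePushable D S a) ∧ ∀ n, a ∉ L n → K n ⊆ S := by
    intro a haD
    classical
    obtain ⟨N, hN⟩ := hKexh {a} (singleton_subset_iff.2 haD) isCompact_singleton
    have hex : ∃ n, a ∈ L n := ⟨N, hsub N (.inl (hN rfl))⟩
    have hmin {n : ℕ} (hn : a ∉ L n) : n < Nat.find hex :=
      lt_of_not_ge fun h ↦ hn (hL h (Nat.find_spec hex))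
    rcases hfind : Nat.find hex with _ | m
    · exact ⟨∅, ⟨isCompact_empty, isPolePushable_empty⟩, fun n hn ↦ by simpa [hfind] using hmin hn⟩
    · have hm : a ∉ L m := Nat.find_min hex (hfind ▸ m.lt_succ_self)
      exact ⟨K m, ⟨hK m, hpush m a fun h ↦ hm (hsub m (.inr h))⟩,
        fun n hn ↦ hKmono (Nat.lt_succ_iff.1 ((hmin hn).trans_eq hfind))⟩
  choose! S hS using hpushable
  refine ⟨S, fun a ha ↦ (hS a ha).1, fun C hCD hC ↦ ?_⟩
  obtain ⟨n, hn⟩ := hKexh C hCD hC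
  refine ⟨L n, ?_, ?_, fun a ha ↦ hn.trans ((hS a ha.1).2 n ha.2)⟩
  · exact iUnion₂_subset fun m _ ↦ union_subset (hKD m) (hK'D m)
  · exact (finite_Iic n).isCompact_biUnion fun m _ ↦ (hK m).union (hK' m)

theorem IsPolePushable.exists_norm_eval_inv_sub_le (h : IsPolePushable D K a) (hK : IsCompact K)
    (q : ℂ[X]) {ε : ℝ} (hε : 0 < ε) :
    ∃ Q : ℂ → ℂ, DifferentiableOn ℂ Q D ∧ ∀ z ∈ K, ‖q.eval (z - a)⁻¹ - Q z‖ ≤ ε := by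
  have := isCompact_iff_compactSpace.1 hK
  obtain ⟨g, hg, hga⟩ := h
  have hq : aeval g q ∈ (holRestrict D K).topologicalClosure :=
    Algebra.adjoin_le (singleton_subset_iff.2 hg) (aeval_mem_adjoin_singleton ℂ g)
  obtain ⟨f, ⟨Q, hQ, hfQ⟩, hdist⟩ := Metric.mem_closure_iff.1 hq ε hε
  refine ⟨Q, hQ, fun z hz ↦ ?_⟩
  have heval : aeval g q ⟨z, hz⟩ = q.eval (z - a)⁻¹ := by
    rw [← eq_inv_of_mul_eq_one_left (hga ⟨z, hz⟩), ← coe_aeval_eq_eval]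
    exact (aeval_algHom_apply (ContinuousMap.evalAlgHom ℂ ℂ (⟨z, hz⟩ : K)) g q).symm
  calc ‖q.eval (z - a)⁻¹ - Q z‖ = dist (aeval g q ⟨z, hz⟩) (f ⟨z, hz⟩) := by
        rw [heval, hfQ, dist_eq_norm]
    _ ≤ ε := (ContinuousMap.dist_apply_le_dist _).trans hdist.le

end PolePushing

section MittagLeffler

section PrincipalPart

variable {𝕜 : Type*} [NontriviallyNormedField 𝕜] {a : 𝕜}

theorem exists_inv_pow_mul_eq_eval_inv_add (n : ℕ) {g : 𝕜 → 𝕜} (hg : AnalyticAt 𝕜 g a) :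
    ∃ q : 𝕜[X], ∃ k : 𝕜 → 𝕜, AnalyticAt 𝕜 k a ∧
      ∀ z ≠ a, (z - a)⁻¹ ^ n * g z = q.eval (z - a)⁻¹ + k z := by
  induction n generalizing g with
  | zero => exact ⟨0, g, hg, by simp⟩
  | succ n ih =>
    obtain ⟨p, hp⟩ := hg
    obtain ⟨q, k, hk, hqk⟩ := ih hp.has_fpower_series_dslope_fslope.analyticAt
    refine ⟨C (g a) * X ^ (n + 1) + q, k, hk, fun z hz ↦ ?_⟩
    have hslope : g z = g a + (z - a) * dslope g a z := by
      rw [← smul_eq_mul, sub_smul_dslope, add_sub_cancel]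
    have hinv : (z - a)⁻¹ * (z - a) = 1 := inv_mul_cancel₀ (sub_ne_zero.2 hz)
    rw [eval_add, add_assoc, ← hqk z hz, hslope]
    simp only [eval_mul, eval_C, eval_pow, eval_X]
    linear_combination ((z - a)⁻¹ ^ n * dslope g a z) * hinv

theorem exists_eventuallyEq_eval_inv_add {φ : 𝕜 → 𝕜} (hφ : MeromorphicAt φ a) :
    ∃ q : 𝕜[X], ∃ k : 𝕜 → 𝕜, AnalyticAt 𝕜 k a ∧
      φ =ᶠ[𝓝[≠] a] fun z ↦ q.eval (z - a)⁻¹ + k z := by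
  obtain ⟨n, hn⟩ := hφ
  obtain ⟨q, k, hk, hqk⟩ := exists_inv_pow_mul_eq_eval_inv_add n hn
  refine ⟨q, k, hk, eventually_mem_nhdsWithin.mono fun z hz ↦ ?_⟩
  have hne : (z - a) ^ n ≠ 0 := pow_ne_zero n (sub_ne_zero.2 hz)
  calc φ z = (z - a)⁻¹ ^ n * (z - a) ^ n • φ z := by
        rw [smul_eq_mul, inv_pow, inv_mul_cancel_left₀ hne]
    _ = q.eval (z - a)⁻¹ + k z := hqk z hz

end PrincipalPart

theorem differentiableOn_tsum_of_summable_norm_cofinite {ι E : Type*} [NormedAddCommGroup E]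
    [NormedSpace ℂ E] [CompleteSpace E] {T : ι → ℂ → E} {u : ι → ℝ} {U : Set ℂ} (hu : Summable u)
    (hT : ∀ i, DifferentiableOn ℂ (T i) U) (hU : IsOpen U)
    (hle : ∀ᶠ i in cofinite, ∀ z ∈ U, ‖T i z‖ ≤ u i) :
    DifferentiableOn ℂ (fun z ↦ ∑' i, T i z) U :=
  (tendstoUniformlyOn_tsum_of_cofinite_eventually hu hle).tendstoLocallyUniformlyOn.differentiableOn
    (Eventually.of_forall fun _ ↦ DifferentiableOn.fun_sum fun i _ ↦ hT i) hU

variable {D : Set ℂ}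

theorem exists_summable_norm_eval_inv_sub_le (hD : IsOpen D) {q : ℂ → ℂ[X]}
    (hqD : ∀ a, q a ≠ 0 → a ∈ D) (hq : ∀ K ⊆ D, IsCompact K → {a ∈ K | q a ≠ 0}.Finite) :
    ∃ (Q : ℂ → ℂ → ℂ) (u : ℂ → ℝ), (∀ a, DifferentiableOn ℂ (Q a) D) ∧ Summable u ∧
      ∀ K ⊆ D, IsCompact K →
        ∀ᶠ a in cofinite, ∀ z ∈ K, ‖(q a).eval (z - a)⁻¹ - Q a z‖ ≤ u a := by
  obtain ⟨S, hS, hSexh⟩ := exists_isPolePushable_family hD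
  obtain ⟨C, -, hCD, hC, hCexh⟩ := exists_monotone_isCompact_exhaustion hD
  have hcount : {a | q a ≠ 0}.Countable := by
    refine (countable_iUnion fun n ↦ (hq (C n) (hCD n) (hC n)).countable).mono fun a ha ↦ ?_
    obtain ⟨n, hn⟩ := hCexh {a} (singleton_subset_iff.2 (hqD a ha)) isCompact_singleton
    exact mem_iUnion.2 ⟨n, hn rfl, ha⟩
  obtain ⟨ε, hε, c, hsum, -⟩ := hcount.exists_pos_hasSum_le one_pos
  have happrox (a : ℂ) : ∃ Q : ℂ → ℂ, DifferentiableOn ℂ Q D ∧ (q a = 0 → Q = 0) ∧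
      (q a ≠ 0 → ∀ z ∈ S a, ‖(q a).eval (z - a)⁻¹ - Q z‖ ≤ ε a) := by
    by_cases ha : q a = 0
    · exact ⟨0, differentiableOn_const 0, fun _ ↦ rfl, fun h ↦ absurd ha h⟩
    · obtain ⟨hSa, hpush⟩ := hS a (hqD a ha)
      obtain ⟨Q, hQ, hle⟩ := hpush.exists_norm_eval_inv_sub_le hSa (q a) (hε a)
      exact ⟨Q, hQ, fun h ↦ absurd h ha, fun _ ↦ hle⟩
  choose Q hQ hQ0 hQle using happrox
  refine ⟨Q, indicator {a | q a ≠ 0} ε, hQ, summable_subtype_iff_indicator.1 hsum.summable,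
    fun K hKD hK ↦ ?_⟩
  obtain ⟨K', hK'D, hK', hKS⟩ := hSexh K hKD hK
  refine (hq K' hK'D hK').eventually_cofinite_notMem.mono fun a ha z hz ↦ ?_
  by_cases hqa : q a = 0
  · simp [hqa, hQ0 a hqa]
  · rw [indicator_of_mem hqa]
    exact hQle a hqa z (hKS a ⟨hqD a hqa, fun h ↦ ha ⟨h, hqa⟩⟩ hz)

theorem exists_forall_eventuallyEq_eval_inv_add (hD : IsOpen D) {q : ℂ → ℂ[X]}
    (hqD : ∀ a, q a ≠ 0 → a ∈ D) (hq : ∀ K ⊆ D, IsCompact K → {a ∈ K | q a ≠ 0}.Finite) :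
    ∃ h : ℂ → ℂ, ∀ a ∈ D, ∃ k : ℂ → ℂ, AnalyticAt ℂ k a ∧
      h =ᶠ[𝓝[≠] a] fun z ↦ (q a).eval (z - a)⁻¹ + k z := by
  classical
  obtain ⟨Q, u, hQ, hu, hle⟩ := exists_summable_norm_eval_inv_sub_le hD hqD hq
  let T (b z : ℂ) : ℂ := (q b).eval (z - b)⁻¹ - Q b z
  refine ⟨fun z ↦ ∑' b, T b z, fun a ha ↦ ?_⟩
  obtain ⟨K, hK, haK, hKD⟩ := exists_compact_subset hD ha
  -- `V` is a neighbourhood of `a` whose only possible pole is `a` itself.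
  let V : Set ℂ := interior K \ ({b ∈ K | q b ≠ 0} \ {a})
  have hVK : V ⊆ K := sdiff_subset.trans interior_subset
  have hV : IsOpen V := isOpen_interior.sdiff ((hq K hKD hK).sdiff).isClosed
  have haV : V ∈ 𝓝 a := hV.mem_nhds ⟨haK, fun h ↦ h.2 rfl⟩
  let T' (b z : ℂ) : ℂ := if b = a then 0 else T b z
  have hT' (b : ℂ) : DifferentiableOn ℂ (T' b) V := by
    by_cases hb : b = a
    · simp [T', hb]
    have hpole : DifferentiableOn ℂ (fun z ↦ (q b).eval (z - b)⁻¹) V := by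
      by_cases hqb : q b = 0
      · simp [hqb]
      · refine (q b).differentiable.comp_differentiableOn (DifferentiableOn.inv (by fun_prop) ?_)
        rintro z hz h
        exact hz.2 ⟨⟨hVK hz, sub_eq_zero.1 h ▸ hqb⟩, fun hza ↦ hb (sub_eq_zero.1 h ▸ hza)⟩
    simpa [T', hb, T] using! hpole.sub ((hQ b).mono (hVK.trans hKD))
  have hle' : ∀ᶠ b in cofinite, ∀ z ∈ V, ‖T' b z‖ ≤ u b := by
    filter_upwards [hle K hKD hK, (finite_singleton a).eventually_cofinite_notMem]
      with b hb hba z hz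
    rw [mem_singleton_iff] at hba
    simpa [T', hba] using hb z (hVK hz)
  have hrest : AnalyticAt ℂ (fun z ↦ ∑' b, T' b z) a :=
    (differentiableOn_tsum_of_summable_norm_cofinite hu hT' hV hle').analyticAt haV
  refine ⟨fun z ↦ -Q a z + ∑' b, T' b z,
    ((hQ a).analyticAt (hD.mem_nhds ha)).neg.add hrest, ?_⟩
  filter_upwards [mem_nhdsWithin_of_mem_nhds haV] with z hz
  have hsummable : Summable fun b ↦ T b z :=
    .of_norm_bounded_eventually hu ((hle K hKD hK).mono fun b hb ↦ hb z (hVK hz))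
  rw [hsummable.tsum_eq_add_tsum_ite a]
  simp only [T, T']
  ring

theorem exists_mittagLeffler (hD : IsOpen D) {φ : ℂ → ℂ → ℂ} (hφ : ∀ a ∈ D, MeromorphicAt (φ a) a)
    (hfin : ∀ K ⊆ D, IsCompact K → {a ∈ K | ¬ AnalyticAt ℂ (φ a) a}.Finite) :
    ∃ h : ℂ → ℂ, ∀ a ∈ D, ∃ k : ℂ → ℂ, AnalyticAt ℂ k a ∧ h =ᶠ[𝓝[≠] a] φ a + k := by
  have hprincipal (a : ℂ) : ∃ q : ℂ[X], (q ≠ 0 → a ∈ D ∧ ¬ AnalyticAt ℂ (φ a) a) ∧ (a ∈ D →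
      ∃ k : ℂ → ℂ, AnalyticAt ℂ k a ∧ φ a =ᶠ[𝓝[≠] a] fun z ↦ q.eval (z - a)⁻¹ + k z) := by
    by_cases ha : a ∈ D ∧ ¬ AnalyticAt ℂ (φ a) a
    · obtain ⟨q, hq⟩ := exists_eventuallyEq_eval_inv_add (hφ a ha.1)
      exact ⟨q, fun _ ↦ ha, fun _ ↦ hq⟩
    · exact ⟨0, fun h ↦ absurd rfl h, fun haD ↦
        ⟨φ a, not_not.1 fun h ↦ ha ⟨haD, h⟩, by simp⟩⟩
  choose q hq hφq using hprincipal
  obtain ⟨h, hh⟩ := exists_forall_eventuallyEq_eval_inv_add hD (fun a ha ↦ (hq a ha).1)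
    fun K hKD hK ↦ (hfin K hKD hK).subset fun a ha ↦ ⟨ha.1, (hq a ha.2).2⟩
  refine ⟨h, fun a ha ↦ ?_⟩
  obtain ⟨k, hk, hφk⟩ := hφq a ha
  obtain ⟨l, hl, hhl⟩ := hh a ha
  refine ⟨l - k, hl.sub hk, ?_⟩
  filter_upwards [hφk, hhl] with z hz hz'
  simp only [Pi.add_apply, Pi.sub_apply, hz, hz']
  ring

end MittagLeffler

section Interpolation

section Local

variable {𝕜 E : Type*} [NontriviallyNormedField 𝕜] [NormedAddCommGroup E] [NormedSpace 𝕜 E]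

theorem eventually_ne_zero_of_analyticOrderAt_ne_top {f : 𝕜 → E} {a : 𝕜} (hf : AnalyticAt 𝕜 f a)
    (h : analyticOrderAt f a ≠ ⊤) : ∀ᶠ z in 𝓝[≠] a, f z ≠ 0 :=
  hf.eventually_eq_zero_or_eventually_ne_zero.resolve_left fun h0 ↦ h (analyticOrderAt_eq_top.2 h0)

theorem exists_eventuallyEq_mul_of_analyticOrderAt_le {f g : 𝕜 → 𝕜} {a : 𝕜}
    (hf : AnalyticAt 𝕜 f a) (hg : AnalyticAt 𝕜 g a)
    (h : analyticOrderAt f a ≤ analyticOrderAt g a) :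
    ∃ k : 𝕜 → 𝕜, AnalyticAt 𝕜 k a ∧ g =ᶠ[𝓝 a] f * k := by
  by_cases hftop : analyticOrderAt f a = ⊤
  · have hg0 := analyticOrderAt_eq_top.1 (top_le_iff.1 (hftop ▸ h))
    exact ⟨0, analyticAt_const, hg0.mono fun z hz ↦ by simp [hz]⟩
  obtain ⟨u, hu, hua, hfu⟩ := hf.analyticOrderAt_ne_top.1 hftop
  rw [← Nat.cast_analyticOrderNatAt hftop] at h
  obtain ⟨v, hv, hgv⟩ := (natCast_le_analyticOrderAt hg).1 h
  refine ⟨v / u, hv.div hu hua, ?_⟩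
  filter_upwards [hfu, hgv, hu.continuousAt.eventually_ne hua] with z hfz hgz huz
  rw [hgz, Pi.mul_apply, hfz, Pi.div_apply, smul_eq_mul, smul_eq_mul]
  field_simp

theorem exists_forall_eventuallyEq_of_eventuallyEq_nhdsNE {U : Set 𝕜} {H : 𝕜 → E}
    {k : 𝕜 → 𝕜 → E} (hk : ∀ a ∈ U, AnalyticAt 𝕜 (k a) a) (hH : ∀ a ∈ U, H =ᶠ[𝓝[≠] a] k a) :
    ∃ G : 𝕜 → E, ∀ a ∈ U, G =ᶠ[𝓝 a] k a := by
  have hlim {a z : 𝕜} (hz : ContinuousAt (k a) z) (h : H =ᶠ[𝓝[≠] z] k a) :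
      limUnder (𝓝[≠] z) H = k a z :=
    ((hz.tendsto.mono_left nhdsWithin_le_nhds).congr' h.symm).limUnder_eq
  refine ⟨fun z ↦ limUnder (𝓝[≠] z) H, fun a ha ↦ ?_⟩
  have hne : ∀ᶠ z in 𝓝[≠] a, H =ᶠ[𝓝 z] k a := eventually_nhdsNE_eventually_nhds_iff.2 (hH a ha)
  rw [eventually_nhdsWithin_iff] at hne
  filter_upwards [hne, (hk a ha).eventually_continuousAt] with z hz hcont
  rcases eq_or_ne z a with rfl | hza
  · exact hlim hcont (hH z ha)
  · exact hlim hcont ((hz hza).filter_mono nhdsWithin_le_nhds)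

theorem finite_zeros_of_analyticOrderAt_ne_top {K : Set 𝕜} (hK : IsCompact K) {f : 𝕜 → E}
    (hf : ∀ a ∈ K, AnalyticAt 𝕜 f a) (htop : ∀ a ∈ K, analyticOrderAt f a ≠ ⊤) :
    {a ∈ K | f a = 0}.Finite := by
  have hcod : {z | f z ≠ 0} ∈ codiscreteWithin K :=
    mem_codiscreteWithin_iff_forall_mem_nhdsNE.2 fun a ha ↦ mem_of_superset
      (eventually_ne_zero_of_analyticOrderAt_ne_top (hf a ha) (htop a ha)) subset_union_left
  exact (hK.finite_sdiff_of_mem_codiscreteWithin hcod).subset fun a ha ↦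
    ⟨ha.1, by simpa using ha.2⟩

theorem exists_analyticOnNhd_eqOn_mul {U : Set 𝕜} {F G : 𝕜 → 𝕜} (hF : AnalyticOnNhd 𝕜 F U)
    (htop : ∀ a ∈ U, analyticOrderAt F a ≠ ⊤) (hG : AnalyticOnNhd 𝕜 G U)
    (hle : ∀ a ∈ U, analyticOrderAt F a ≤ analyticOrderAt G a) :
    ∃ H, AnalyticOnNhd 𝕜 H U ∧ EqOn G (F * H) U := by
  choose! k hk hGk using fun a ha ↦
    exists_eventuallyEq_mul_of_analyticOrderAt_le (hF a ha) (hG a ha) (hle a ha)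
  have hlocal : ∀ a ∈ U, G / F =ᶠ[𝓝[≠] a] k a := fun a ha ↦ by
    filter_upwards [(hGk a ha).filter_mono nhdsWithin_le_nhds,
      eventually_ne_zero_of_analyticOrderAt_ne_top (hF a ha) (htop a ha)] with z hz hFz
    rw [Pi.div_apply, hz, Pi.mul_apply, mul_div_cancel_left₀ _ hFz]
  obtain ⟨H, hH⟩ := exists_forall_eventuallyEq_of_eventuallyEq_nhdsNE hk hlocal
  refine ⟨H, fun a ha ↦ (hk a ha).congr (hH a ha).symm, fun a ha ↦ ?_⟩
  rw [(hGk a ha).self_of_nhds, Pi.mul_apply, Pi.mul_apply, (hH a ha).self_of_nhds]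

end Local

variable {D : Set ℂ} {F : ℂ → ℂ}

theorem exists_analyticOnNhd_analyticOrderAt_le_sub (hD : IsOpen D) (hF : AnalyticOnNhd ℂ F D)
    (htop : ∀ a ∈ D, analyticOrderAt F a ≠ ⊤) {c : ℂ → ℂ → ℂ}
    (hc : ∀ a ∈ D, AnalyticAt ℂ (c a) a) :
    ∃ G, AnalyticOnNhd ℂ G D ∧ ∀ a ∈ D, analyticOrderAt F a ≤ analyticOrderAt (G - c a) a := by
  obtain ⟨h, hh⟩ := exists_mittagLeffler hD (φ := fun a ↦ c a / F)
    (fun a ha ↦ (hc a ha).meromorphicAt.div (hF a ha).meromorphicAt)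
    fun K hKD hK ↦ (finite_zeros_of_analyticOrderAt_ne_top hK (fun a ha ↦ hF a (hKD ha))
      fun a ha ↦ htop a (hKD ha)).subset fun a ha ↦
        ⟨ha.1, not_not.1 fun hFa ↦ ha.2 ((hc a (hKD ha.1)).div (hF a (hKD ha.1)) hFa)⟩
  choose! k hk hhk using hh
  have hlocal : ∀ a ∈ D, F * h =ᶠ[𝓝[≠] a] c a + F * k a := fun a ha ↦ by
    filter_upwards [hhk a ha, eventually_ne_zero_of_analyticOrderAt_ne_top (hF a ha) (htop a ha)]
      with z hz hFz
    simp only [Pi.mul_apply, Pi.add_apply, Pi.div_apply, hz]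
    field_simp
  obtain ⟨G, hG⟩ := exists_forall_eventuallyEq_of_eventuallyEq_nhdsNE
    (fun a ha ↦ (hc a ha).add ((hF a ha).mul (hk a ha))) hlocal
  refine ⟨G, fun a ha ↦ ((hc a ha).add ((hF a ha).mul (hk a ha))).congr (hG a ha).symm,
    fun a ha ↦ ?_⟩
  have hsub : G - c a =ᶠ[𝓝 a] F * k a := (hG a ha).mono fun z hz ↦ by simp [hz]
  rw [analyticOrderAt_congr hsub, analyticOrderAt_mul (hF a ha) (hk a ha)]
  exact le_self_add

end Interpolation

namespace Hol

variable {D : Set ℂ} {f g : Hol D} {a : D}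

/-- The extension of `f ∈ H(D)` by zero to an ambient function on `ℂ`. -/
noncomputable def zeroExt (f : Hol D) : ℂ → ℂ := Function.extend (↑) (f : D → ℂ) 0

/-- The vanishing order of `f ∈ H(D)` at `a`, with value `⊤` if `f` vanishes near `a`. For open `D`
it depends only on the values of `f` on `D`. -/
noncomputable def ord (f : Hol D) (a : D) : ℕ∞ := analyticOrderAt (zeroExt f) a

@[simp]
theorem zeroExt_coe (f : Hol D) (z : D) : zeroExt f z = (f : D → ℂ) z :=
  Subtype.val_injective.extend_apply _ _ _

theorem zeroExt_mul (f g : Hol D) : zeroExt (f * g) = zeroExt f * zeroExt g := by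
  simpa [zeroExt] using Function.extend_mul Subtype.val (f : D → ℂ) g 0 0

theorem zeroExt_sub (f g : Hol D) : zeroExt (f - g) = zeroExt f - zeroExt g := by
  simpa [zeroExt] using Function.extend_sub Subtype.val (f : D → ℂ) g 0 0

theorem exists_eqOn_zeroExt {F : ℂ → ℂ} (hF : DifferentiableOn ℂ F D) :
    ∃ f : Hol D, EqOn (zeroExt f) F D :=
  ⟨⟨fun z ↦ F z, F, hF, fun _ ↦ rfl⟩, fun z hz ↦ zeroExt_coe _ ⟨z, hz⟩⟩

theorem analyticOnNhd_zeroExt (hD : IsOpen D) (f : Hol D) : AnalyticOnNhd ℂ (zeroExt f) D := by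
  obtain ⟨F, hF, hFf⟩ := f.2
  exact (hF.congr fun z hz ↦ (zeroExt_coe f ⟨z, hz⟩).trans (hFf ⟨z, hz⟩).symm).analyticOnNhd hD

theorem analyticAt_zeroExt (hD : IsOpen D) (f : Hol D) (a : D) : AnalyticAt ℂ (zeroExt f) a :=
  analyticOnNhd_zeroExt hD f a a.2

theorem ord_zero (a : D) : ord 0 a = ⊤ :=
  analyticOrderAt_eq_top.2 (Eventually.of_forall fun z ↦ by
    rw [← sub_self 0, zeroExt_sub, sub_self, Pi.zero_apply])

theorem ord_mul (hD : IsOpen D) (f g : Hol D) (a : D) : ord (f * g) a = ord f a + ord g a := by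
  rw [ord, zeroExt_mul, analyticOrderAt_mul (analyticAt_zeroExt hD f a) (analyticAt_zeroExt hD g a),
    ord, ord]

theorem ord_eq_zero (hD : IsOpen D) : ord f a = 0 ↔ (f : D → ℂ) a ≠ 0 := by
  simp [ord, analyticOrderAt_eq_zero, analyticAt_zeroExt hD]

theorem one_le_ord (hD : IsOpen D) : 1 ≤ ord f a ↔ (f : D → ℂ) a = 0 := by
  rw [Order.one_le_iff_pos, pos_iff_ne_zero, ne_eq, ord_eq_zero hD, not_not]

theorem ord_ne_top_of_mem_connectedComponent (hD : IsOpen D) {b : D}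
    (hb : b ∈ connectedComponent a) (h : ord f b ≠ ⊤) : ord f a ≠ ⊤ := by
  have hsub : Subtype.val '' connectedComponent a ⊆ D := Subtype.coe_image_subset _ _
  exact ((analyticOnNhd_zeroExt hD f).mono hsub).analyticOrderAt_ne_top_of_isPreconnected
    (isPreconnected_connectedComponent.image _ continuous_subtype_val.continuousOn)
    (mem_image_of_mem _ hb) (mem_image_of_mem _ mem_connectedComponent) h

theorem dvd_of_ord_le (hD : IsOpen D) (hf : ∀ a, ord f a ≠ ⊤) (h : ∀ a, ord f a ≤ ord g a) :
    f ∣ g := by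
  obtain ⟨K, hK, hgK⟩ := exists_analyticOnNhd_eqOn_mul (analyticOnNhd_zeroExt hD f)
    (fun a ha ↦ hf ⟨a, ha⟩) (analyticOnNhd_zeroExt hD g) fun a ha ↦ h ⟨a, ha⟩
  obtain ⟨k, hk⟩ := exists_eqOn_zeroExt hK.differentiableOn
  refine ⟨k, Subtype.ext (funext fun z ↦ ?_)⟩
  simpa [← hk z.2] using hgK z.2

theorem mem_nonZeroDivisors_of_ord_ne_top (hD : IsOpen D) (hf : ∀ a, ord f a ≠ ⊤) :
    f ∈ nonZeroDivisors (Hol D) := by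
  refine mem_nonZeroDivisors_iff_right.2 fun g hgf ↦ Subtype.ext (funext fun a ↦ ?_)
  have hzero : ord (g * f) a = ⊤ := by
    rw [hgf, ord_zero]
  rw [ord_mul hD, ENat.add_eq_top, or_iff_left (hf a)] at hzero
  exact (one_le_ord hD).1 (hzero ▸ le_top)

theorem exists_ord_le_analyticOrderAt_sub (hD : IsOpen D) (hf : ∀ a, ord f a ≠ ⊤)
    {c : D → ℂ → ℂ} (hc : ∀ a : D, AnalyticAt ℂ (c a) a) :
    ∃ g : Hol D, ∀ a : D, ord f a ≤ analyticOrderAt (zeroExt g - c a) a := by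
  obtain ⟨c, rfl⟩ := Subtype.val_injective.surjective_comp_right c
  obtain ⟨G, hG, hle⟩ := exists_analyticOnNhd_analyticOrderAt_le_sub hD
    (analyticOnNhd_zeroExt hD f) (fun a ha ↦ hf ⟨a, ha⟩) fun a ha ↦ hc ⟨a, ha⟩
  obtain ⟨g, hg⟩ := exists_eqOn_zeroExt hG.differentiableOn
  refine ⟨g, fun a ↦ (hle a a.2).trans_eq (analyticOrderAt_congr ?_)⟩
  exact (hg.eventuallyEq_of_mem (hD.mem_nhds a.2)).symm.sub .rfl

theorem exists_ord_le_ord_sub (hD : IsOpen D) (hf : ∀ a, ord f a ≠ ⊤) (c : D → Hol D) :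
    ∃ g : Hol D, ∀ a, ord f a ≤ ord (g - c a) a := by
  simpa only [ord, zeroExt_sub] using!
    exists_ord_le_analyticOrderAt_sub hD hf (fun a ↦ analyticAt_zeroExt hD (c a) a)

theorem exists_analyticAt_ord_le_sub_mul (hD : IsOpen D) {h : Hol D}
    (hle : min (ord f a) (ord g a) ≤ ord h a) :
    ∃ c : ℂ → ℂ, AnalyticAt ℂ c a ∧ ord f a ≤ analyticOrderAt (zeroExt h - c * zeroExt g) a := by
  rcases min_le_iff.1 hle with hfh | hgh
  · exact ⟨0, analyticAt_const, by simpa [ord] using hfh⟩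
  · obtain ⟨c, hc, hhc⟩ := exists_eventuallyEq_mul_of_analyticOrderAt_le
      (analyticAt_zeroExt hD g a) (analyticAt_zeroExt hD h a) hgh
    refine ⟨c, hc, le_top.trans_eq (analyticOrderAt_eq_top.2 ?_).symm⟩
    filter_upwards [hhc] with z hz
    simp [hz, mul_comm]

theorem mem_span_pair_of_min_ord_le (hD : IsOpen D) (hf : ∀ a, ord f a ≠ ⊤) {h : Hol D}
    (hle : ∀ a, min (ord f a) (ord g a) ≤ ord h a) : h ∈ Ideal.span {f, g} := by
  choose c hc hfc using fun a ↦ exists_analyticAt_ord_le_sub_mul hD (hle a)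
  obtain ⟨s, hs⟩ := exists_ord_le_analyticOrderAt_sub hD hf hc
  have hdvd : f ∣ h - s * g := dvd_of_ord_le hD hf fun a ↦ by
    have hsplit : zeroExt (h - s * g) =
        (zeroExt h - c a * zeroExt g) - (zeroExt s - c a) * zeroExt g := by
      rw [zeroExt_sub, zeroExt_mul]
      ring
    have hsc : AnalyticAt ℂ (zeroExt s - c a) a := (analyticAt_zeroExt hD s a).sub (hc a)
    rw [ord.eq_def (h - s * g), hsplit]
    refine (le_min (hfc a) ?_).trans le_analyticOrderAt_sub
    rw [analyticOrderAt_mul hsc (analyticAt_zeroExt hD g a)]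
    exact (hs a).trans le_self_add
  obtain ⟨t, ht⟩ := hdvd
  exact Ideal.mem_span_pair.2 ⟨t, s, by rw [mul_comm t, ← ht, sub_add_cancel]⟩

theorem mem_of_zeros_subset (hD : IsOpen D) {M : Ideal (Hol D)} (hM : M.IsMaximal) (hfM : f ∈ M)
    (hf : ∀ a, ord f a ≠ ⊤) (hfg : ∀ a, (f : D → ℂ) a = 0 → (g : D → ℂ) a = 0) : g ∈ M := by
  by_contra hgM
  obtain ⟨y, i, hi, hyi⟩ := hM.exists_inv hgM
  refine M.ne_top_iff_one.1 hM.ne_top ?_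
  refine Ideal.span_le.2 (pair_subset hfM hi)
    (mem_span_pair_of_min_ord_le hD hf fun a ↦ ?_)
  by_cases hfa : (f : D → ℂ) a = 0
  · have hia : (i : D → ℂ) a = 1 := by
      simpa [hfg a hfa] using congrFun (congrArg Subtype.val hyi) a
    simp [(ord_eq_zero hD).2 (hia.trans_ne one_ne_zero)]
  · simp [(ord_eq_zero hD).2 hfa]

-- `f` is `z - b` with `b` a base point of the connected component of `z`.
theorem exists_forall_component_zero_ord_ne_top (hD : IsOpen D) :
    ∃ f : Hol D, ∀ a, ∃ b ∈ connectedComponent a, (f : D → ℂ) b = 0 ∧ ord f b ≠ ⊤ := by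
  have := hD.locallyConnectedSpace
  let base (z : D) : D :=
    Function.surjInv ConnectedComponents.surjective_coe (z : ConnectedComponents D)
  have hbase (z : D) : base z ∈ connectedComponent z :=
    ConnectedComponents.coe_eq_coe'.1 (Function.surjInv_eq _ _)
  have hconst {a z : D} (hz : z ∈ connectedComponent a) : base z = base a :=
    congrArg (Function.surjInv ConnectedComponents.surjective_coe)
      (ConnectedComponents.coe_eq_coe'.2 hz)
  let F : ℂ → ℂ := Function.extend (↑) (fun z : D ↦ (z : ℂ) - base z) 0
  have hF (a : D) : F =ᶠ[𝓝 ↑a] fun z ↦ z - (base a : ℂ) := by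
    rw [← hD.isOpenEmbedding_subtypeVal.map_nhds_eq]
    refine eventually_map.2 ?_
    filter_upwards [isOpen_connectedComponent.mem_nhds mem_connectedComponent] with z hz
    rw [← hconst hz]
    exact Subtype.val_injective.extend_apply _ _ _
  obtain ⟨f, hf⟩ := exists_eqOn_zeroExt (F := F) fun a ha ↦
    ((hF ⟨a, ha⟩).differentiableAt_iff.2 (by fun_prop)).differentiableWithinAt
  refine ⟨f, fun a ↦ ⟨base a, hbase a, ?_, ?_⟩⟩
  all_goals have hb : base (base a) = base a := hconst (hbase a)
  · rw [← zeroExt_coe, hf (base a).2, (hF (base a)).self_of_nhds, hb]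
    exact sub_self _
  · have hord : ord f (base a) = 1 := by
      refine (analyticOrderAt_congr ?_).trans analyticOrderAt_id_sub_const_self
      simpa [hb] using (hf.eventuallyEq_of_mem (hD.mem_nhds (base a).2)).trans (hF (base a))
    simp [hord]

theorem exists_mem_forall_ord_ne_top_component_zero (hD : IsOpen D) {M : Ideal (Hol D)}
    (hM : M.IsMaximal) :
    ∃ f ∈ M, (∀ a, ord f a ≠ ⊤) ∧ ∀ a, ∃ b ∈ connectedComponent a, (f : D → ℂ) b = 0 := by
  obtain ⟨π, hπ⟩ := exists_forall_component_zero_ord_ne_top hD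
  obtain ⟨i, hi, hπi⟩ : ∃ i : Hol D, π * i ∈ M ∧ ∀ b, (π : D → ℂ) b = 0 → (i : D → ℂ) b = 1 := by
    by_cases hπM : π ∈ M
    · exact ⟨1, by simpa using hπM, fun b _ ↦ by simp⟩
    · obtain ⟨y, i, hi, hyi⟩ := hM.exists_inv hπM
      exact ⟨i, M.mul_mem_left π hi, fun b hb ↦ by
        simpa [hb] using congrFun (congrArg Subtype.val hyi) b⟩
  refine ⟨π * i, hi, fun a ↦ ?_, fun a ↦ ?_⟩ <;> obtain ⟨b, hba, hb, htop⟩ := hπ a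
  · refine ord_ne_top_of_mem_connectedComponent hD hba ?_
    rw [ord_mul hD, (ord_eq_zero hD).2 ((hπi b hb).trans_ne one_ne_zero), add_zero]
    exact htop
  · exact ⟨b, hba, by simp [hb]⟩

theorem exists_ord_eq_one_of_zero (hD : IsOpen D) (hf : ∀ a, ord f a ≠ ⊤) :
    ∃ p : Hol D, ∀ a, (f : D → ℂ) a = 0 → ord p a = 1 := by
  let c (a : D) : ℂ → ℂ := fun z ↦ z - a
  have hc (a : D) : AnalyticAt ℂ (c a) a := by fun_prop
  obtain ⟨p, hp⟩ := exists_ord_le_analyticOrderAt_sub hD (f := f * f)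
    (fun a ↦ by simpa [ord_mul hD] using hf a) hc
  refine ⟨p, fun a ha ↦ ?_⟩
  have hc1 : analyticOrderAt (c a) a = 1 := analyticOrderAt_id_sub_const_self
  have hlt : analyticOrderAt (c a) a < analyticOrderAt (zeroExt p - c a) a := by
    refine lt_of_lt_of_le ?_ (hp a)
    rw [hc1, ord_mul hD]
    calc (1 : ℕ∞) < 1 + 1 := by norm_num
      _ ≤ ord f a + ord f a := add_le_add ((one_le_ord hD).2 ha) ((one_le_ord hD).2 ha)
  rw [ord, ← hc1, ← analyticOrderAt_add_eq_left_of_lt hlt, add_sub_cancel]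

theorem exists_notMem_dvd_mul (hD : IsOpen D) {M : Ideal (Hol D)} (hM : M ≠ ⊤) (hfM : f ∈ M)
    (hf : ∀ a, ord f a ≠ ⊤) {p u : Hol D} (hptop : ∀ a, ord p a ≠ ⊤)
    (hp : ∀ a, (f : D → ℂ) a = 0 → ord p a = 1) (hu : u ∈ M) : ∃ s ∉ M, p ∣ s * u := by
  classical
  let common (a : D) : Prop := (f : D → ℂ) a = 0 ∧ (u : D → ℂ) a = 0
  have hpf (a : D) : ord (p * f) a ≠ ⊤ := by simp [ord_mul hD, hptop a, hf a]
  obtain ⟨s, hs⟩ := exists_ord_le_ord_sub hD hpf fun a ↦ if common a then 1 else 0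
  simp only [ord_mul hD] at hs
  have hs1 : s - 1 ∈ M := by
    refine Ideal.span_le.2 (pair_subset hfM hu) (mem_span_pair_of_min_ord_le hD hf fun a ↦ ?_)
    by_cases ha : common a
    · exact min_le_of_left_le (le_add_self.trans (by simpa [ha] using hs a))
    · rcases not_and_or.1 ha with ha | ha <;> simp [(ord_eq_zero hD).2 ha]
  refine ⟨s, fun hsM ↦ hM (M.eq_top_iff_one.2 (by simpa using M.sub_mem hsM hs1)),
    dvd_of_ord_le hD hptop fun a ↦ ?_⟩
  rw [ord_mul hD]
  by_cases ha : common a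
  · exact (hp a ha.1).trans_le (((one_le_ord hD).2 ha.2).trans le_add_self)
  · exact (le_self_add.trans (by simpa [ha] using hs a)).trans le_self_add

theorem exists_isLocalGenerator (hD : IsOpen D) {M : Ideal (Hol D)} (hM : M.IsMaximal) :
    ∃ p ∈ nonZeroDivisors (Hol D), IsLocalGenerator M p := by
  obtain ⟨f, hfM, hf, hf0⟩ := exists_mem_forall_ord_ne_top_component_zero hD hM
  obtain ⟨p, hp⟩ := exists_ord_eq_one_of_zero hD hf
  have hptop (a : D) : ord p a ≠ ⊤ := by
    obtain ⟨b, hba, hb⟩ := hf0 a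
    exact ord_ne_top_of_mem_connectedComponent hD hba (by simp [hp b hb])
  have hpM : p ∈ M := mem_of_zeros_subset hD hM hfM hf fun a ha ↦ (one_le_ord hD).1 (hp a ha).ge
  exact ⟨p, mem_nonZeroDivisors_of_ord_ne_top hD hptop, hpM,
    fun u hu ↦ exists_notMem_dvd_mul hD hM.ne_top hfM hf hptop hp hu⟩

end Hol

theorem ki_largest_nonmaximal_prime_general {D : Set ℂ} (hD : IsOpen D) (M : Ideal (Hol D))
    (hM : M.IsMaximal) :
    (ki M).IsPrime ∧ ki M ≤ M ∧ ¬ (ki M).IsMaximal ∧ ki M ≠ M ∧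
      ∀ P : Ideal (Hol D), P.IsPrime → ki M ≤ P → P ≤ M → P = ki M ∨ P = M := by
  obtain ⟨p, hreg, hp⟩ := Hol.exists_isLocalGenerator hD hM
  have hne : ki M ≠ M := hp.ki_ne hM.isPrime hreg
  exact ⟨hp.ki_isPrime hM hreg, ki_le M, fun hmax ↦ hne (hmax.eq_of_le hM.ne_top (ki_le M)), hne,
    fun P hP hle hPM ↦ hp.eq_of_ki_le hM hP hle hPM⟩

/-- Let `D` be a domain in `ℂ` and `M` a free maximal ideal of `H(D)`. Then
`ki(M) = ⋂_{n=1}^∞ Mⁿ` is a non-maximal prime ideal strictly contained in `M`, and it is the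
largest non-maximal prime ideal contained in `M`: every prime ideal `P` with
`ki(M) ⊆ P ⊆ M` equals `ki(M)` or `M`. -/
theorem ki_largest_nonmaximal_prime {D : Set ℂ} (hD : IsOpen D) (hDconn : IsConnected D)
    (M : Ideal (Hol D)) (hM : M.IsMaximal)
    (hfree : (⋂ g ∈ M, ZD g) = (∅ : Set D)) :
    (ki M).IsPrime ∧ ki M ≤ M ∧ ¬ (ki M).IsMaximal ∧ ki M ≠ M ∧
      ∀ P : Ideal (Hol D), P.IsPrime → ki M ≤ P → P ≤ M → P = ki M ∨ P = M :=
  ki_largest_nonmaximal_prime_general hD M hM
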